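/- For each k ∈ {0,1} and every n ∈ ℕ, the split composite likelihood ratio statistic evaluated at the true parameter has expectation at most one: E_{θ*}[U_{α,β,n}^k(θ*)] ≤ 1. -/

import Mathlib

open MeasureTheory ENNReal
open scoped BigOperators Classical

noncomputable section

/-- Division in `ℝ≥0∞` with the convention that the ratio is `0` when the
denominator is `0`. -/
def safeDiv (a b : ℝ≥0∞) : ℝ≥0∞ := if b = 0 then 0 else a / b

variable {d : ℕ} {π : Fin d → Type*} [∀ i, MeasurableSpace (π i)]

/-- The marginal density on the coordinates in `S`, obtained by integrating a density
out over the coordinates in `[d] \ S` (as a function of the full vector, depending only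
on the coordinates in `S`). -/
def marginal (μ : ∀ i, Measure (π i)) (S : Finset (Fin d))
    (f : (∀ i, π i) → ℝ≥0∞) : (∀ i, π i) → ℝ≥0∞ :=
  MeasureTheory.lmarginal μ Sᶜ f

/-- The conditional density of the coordinates in `T1` given the coordinates in `T2`,
with the convention that the ratio is `0` when the denominator is `0`. -/
def condDens (μ : ∀ i, Measure (π i)) (T1 T2 : Finset (Fin d))
    (f : (∀ i, π i) → ℝ≥0∞) (x : ∀ i, π i) : ℝ≥0∞ :=
  safeDiv (marginal μ (T1 ∪ T2) f x) (marginal μ T2 f x)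

/-- `𝕊_d`: the nonempty subsets of `[d]`. -/
abbrev Sd (d : ℕ) := {S : Finset (Fin d) // S.Nonempty}

/-- `𝕋_d`: ordered pairs of disjoint nonempty subsets of `[d]`. -/
abbrev Td (d : ℕ) := {T : Finset (Fin d) × Finset (Fin d) //
  T.1.Nonempty ∧ T.2.Nonempty ∧ Disjoint T.1 T.2}

/-- The individual composite likelihood
`p_{α,β}(x;θ) = ∏_S p_S(x_S;θ)^(α_S/γ) ∏_T p(x_{T←}|x_{T→};θ)^(β_T/γ)`,
where `f = p(·;θ)` is the joint density. -/
def compLik (μ : ∀ i, Measure (π i)) (α : Sd d → ℝ) (β : Td d → ℝ) (γ : ℝ)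
    (f : (∀ i, π i) → ℝ≥0∞) (x : ∀ i, π i) : ℝ≥0∞ :=
  (∏ S : Sd d, marginal μ S.1 f x ^ (α S / γ)) *
  (∏ T : Td d, condDens μ T.1.1 T.1.2 f x ^ (β T / γ))

/-!
For fixed `θ`, each factor of the composite likelihood ratio of `p θ` to `p θ*` has expectation at
most one under `p θ*`: integrating out the coordinates the factor does not involve replaces `p θ*`
by its marginal, which cancels the denominator and leaves a marginal or conditional density of
`p θ` to integrate. The composite ratio is a geometric mean of these factors, the exponents
`α S / γ` and `β T / γ` summing to one, so Hölder's inequality bounds its expectation by one. As the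
observations are i.i.d., the same bound holds for the product over the sample, and the estimator,
being independent of that sample, may be treated as a fixed `θ`.
-/

section SafeDiv

lemma safeDiv_mul_le (a b : ℝ≥0∞) : safeDiv a b * b ≤ a := by
  unfold safeDiv
  split_ifs with hb
  · simp
  · exact ENNReal.mul_le_of_le_div le_rfl

lemma safeDiv_eq_safeDiv_one_mul (a b : ℝ≥0∞) : safeDiv a b = safeDiv 1 b * a := by
  unfold safeDiv
  split_ifs with hb
  · rw [zero_mul]
  · rw [one_div, mul_comm, div_eq_mul_inv]

lemma safeDiv_safeDiv_mul_le (a b c : ℝ≥0∞) : safeDiv a (safeDiv b c) * b ≤ c * a := by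
  by_cases hc : c = 0
  · simp [safeDiv, hc]
  by_cases hc_top : c = ∞
  · simp [safeDiv, hc_top]
  have hb : safeDiv b c * c = b := by
    rw [safeDiv, if_neg hc, ENNReal.div_mul_cancel hc hc_top]
  calc safeDiv a (safeDiv b c) * b
      = safeDiv a (safeDiv b c) * safeDiv b c * c := by rw [mul_assoc, hb]
    _ ≤ a * c := by gcongr; exact safeDiv_mul_le _ _
    _ = c * a := mul_comm a c

lemma safeDiv_mul_mul_comm (a b c e : ℝ≥0∞) :
    safeDiv (a * b) (c * e) = safeDiv a c * safeDiv b e := by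
  by_cases hc : c = 0
  · simp [safeDiv, hc]
  by_cases he : e = 0
  · simp [safeDiv, he]
  simp only [safeDiv, hc, he, mul_eq_zero, or_self, if_false, div_eq_mul_inv]
  rw [ENNReal.mul_inv (Or.inl hc) (Or.inr he), mul_mul_mul_comm]

lemma safeDiv_prod_prod {ι : Type*} (s : Finset ι) (f g : ι → ℝ≥0∞) :
    safeDiv (∏ i ∈ s, f i) (∏ i ∈ s, g i) = ∏ i ∈ s, safeDiv (f i) (g i) := by
  induction s using Finset.cons_induction with
  | empty => simp [safeDiv]
  | cons a s ha ih => simp only [Finset.prod_cons, safeDiv_mul_mul_comm, ih]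

lemma safeDiv_rpow_rpow (a b : ℝ≥0∞) {r : ℝ} (hr : 0 ≤ r) :
    safeDiv (a ^ r) (b ^ r) = safeDiv a b ^ r := by
  rcases hr.eq_or_lt with rfl | hr_pos
  · simp [safeDiv]
  · by_cases hb : b = 0
    · simp [safeDiv, hb, hr_pos]
    · have hbr : b ^ r ≠ 0 := by simp [ENNReal.rpow_eq_zero_iff, hb, hr]
      rw [safeDiv, safeDiv, if_neg hb, if_neg hbr, ENNReal.div_rpow_of_nonneg _ _ hr]

lemma measurable_safeDiv {A : Type*} [MeasurableSpace A] {f g : A → ℝ≥0∞}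
    (hf : Measurable f) (hg : Measurable g) : Measurable fun a => safeDiv (f a) (g a) :=
  Measurable.ite (hg (measurableSet_singleton 0)) measurable_const (hf.div hg)

end SafeDiv

section Lintegral

variable {A : Type*} [MeasurableSpace A] {ν : Measure A}

lemma lintegral_prod_rpow_mul_prod_rpow_le_one {ι κ : Type*} [Fintype ι] [Fintype κ]
    {f : ι → A → ℝ≥0∞} {g : κ → A → ℝ≥0∞} {u : ι → ℝ} {v : κ → ℝ}
    (hf : ∀ i, AEMeasurable (f i) ν) (hg : ∀ k, AEMeasurable (g k) ν)
    (hu : ∀ i, 0 ≤ u i) (hv : ∀ k, 0 ≤ v k) (huv : ∑ i, u i + ∑ k, v k = 1)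
    (hf_le : ∀ i, ∫⁻ a, f i a ∂ν ≤ 1) (hg_le : ∀ k, ∫⁻ a, g k a ∂ν ≤ 1) :
    ∫⁻ a, (∏ i, f i a ^ u i) * ∏ k, g k a ^ v k ∂ν ≤ 1 := by
  have holder := ENNReal.lintegral_prod_norm_pow_le (μ := ν) Finset.univ
    (f := Sum.elim f g) (p := Sum.elim u v)
    (fun i _ => i.rec hf hg) (by simpa using huv) (fun i _ => i.rec hu hv)
  simp only [Fintype.prod_sum_type, Sum.elim_inl, Sum.elim_inr] at holder
  exact holder.trans <| mul_le_one'
    (Finset.prod_le_one' fun i _ => ENNReal.rpow_le_one (hf_le i) (hu i))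
    (Finset.prod_le_one' fun k _ => ENNReal.rpow_le_one (hg_le k) (hv k))

lemma isProbabilityMeasure_withDensity_of_lintegral_eq_one {f : A → ℝ≥0∞}
    (hf : ∫⁻ a, f a ∂ν = 1) : IsProbabilityMeasure (ν.withDensity f) :=
  ⟨by rw [withDensity_apply _ MeasurableSet.univ, Measure.restrict_univ, hf]⟩

lemma lintegral_pi_prod_eq_prod_lintegral {ι : Type*} [Fintype ι] {E : ι → Type*}
    [∀ j, MeasurableSpace (E j)] (ν : ∀ j, Measure (E j)) [∀ j, IsProbabilityMeasure (ν j)]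
    {f : ∀ j, E j → ℝ≥0∞} (hf : ∀ j, Measurable (f j)) :
    ∫⁻ x, ∏ j, f j (x j) ∂Measure.pi ν = ∏ j, ∫⁻ a, f j a ∂ν j := by
  calc ∫⁻ x, ∏ j, f j (x j) ∂Measure.pi ν
      = ∏ j, ∫⁻ x, f j (x j) ∂Measure.pi ν :=
        ProbabilityTheory.lintegral_prod_eq_prod_lintegral_of_indepFun _ _
          (ProbabilityTheory.iIndepFun_pi fun j => (hf j).aemeasurable)
          fun j => (hf j).comp (measurable_pi_apply j)
    _ = ∏ j, ∫⁻ a, f j a ∂ν j :=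
        Finset.prod_congr rfl fun j _ => (measurePreserving_eval ν j).lintegral_comp (hf j)

lemma lintegral_prod_comp_le_one_of_measurePreserving_prod {Ω B Θ ι : Type*}
    [MeasurableSpace Ω] [MeasurableSpace B] [MeasurableSpace Θ] [Fintype ι]
    {P : Measure Ω} [IsProbabilityMeasure ν] {ρ : Measure B}
    [IsProbabilityMeasure ρ] {X : ι → Ω → A} {Y : Ω → B}
    (hXY : MeasurePreserving (fun ω => (fun j => X j ω, Y ω)) P
      ((Measure.pi fun _ : ι => ν).prod ρ))
    {t : B → Θ} (ht : Measurable t) {r : Θ → A → ℝ≥0∞} (hr : Measurable (Function.uncurry r))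
    (hr_le : ∀ θ, ∫⁻ a, r θ a ∂ν ≤ 1) :
    ∫⁻ ω, ∏ j, r (t (Y ω)) (X j ω) ∂P ≤ 1 := by
  have hprod : Measurable fun z : (ι → A) × B => ∏ j, r (t z.2) (z.1 j) :=
    Finset.measurable_prod _ fun j _ =>
      hr.comp ((ht.comp measurable_snd).prodMk ((measurable_pi_apply j).comp measurable_fst))
  calc ∫⁻ ω, ∏ j, r (t (Y ω)) (X j ω) ∂P
      = ∫⁻ z, ∏ j, r (t z.2) (z.1 j) ∂(Measure.pi fun _ : ι => ν).prod ρ :=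
        hXY.lintegral_comp hprod
    _ = ∫⁻ y, ∫⁻ x, ∏ j, r (t y) (x j) ∂(Measure.pi fun _ : ι => ν) ∂ρ :=
        lintegral_prod_symm' _ hprod
    _ = ∫⁻ y, ∏ _j : ι, ∫⁻ a, r (t y) a ∂ν ∂ρ :=
        lintegral_congr fun y =>
          lintegral_pi_prod_eq_prod_lintegral _ fun _ => hr.of_uncurry_left
    _ ≤ ∫⁻ _, 1 ∂ρ := lintegral_mono fun y => Finset.prod_le_one' fun _ _ => hr_le (t y)
    _ = 1 := by rw [lintegral_one, measure_univ]

end Lintegral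

section Marginal

lemma lmarginal_mul_of_dependsOn {δ : Type*} [DecidableEq δ] {E : δ → Type*}
    [∀ i, MeasurableSpace (E i)] (μ : ∀ i, Measure (E i)) {s : Finset δ}
    {f g : (∀ i, E i) → ℝ≥0∞} (hg : DependsOn g (s : Set δ)ᶜ) (hf : Measurable f) :
    lmarginal μ s (g * f) = g * lmarginal μ s f := by
  funext x
  have g_updateFinset (y : ∀ i : s, E i) : g (Function.updateFinset x s y) = g x :=
    hg fun i hi => dif_neg hi
  simp only [lmarginal, Pi.mul_apply, g_updateFinset]
  exact lintegral_const_mul _ (hf.comp measurable_updateFinset)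

variable (μ : ∀ i, Measure (π i)) {f g h : (∀ i, π i) → ℝ≥0∞}

lemma dependsOn_marginal (S : Finset (Fin d)) (f : (∀ i, π i) → ℝ≥0∞) :
    DependsOn (marginal μ S f) S :=
  fun _ _ hxy => lmarginal_congr μ f fun i hi => hxy i (by simpa using hi)

lemma dependsOn_condDens (T1 T2 : Finset (Fin d)) (f : (∀ i, π i) → ℝ≥0∞) :
    DependsOn (condDens μ T1 T2 f) ((T1 ∪ T2 : Finset (Fin d)) : Set (Fin d)) := by
  intro x y hxy
  rw [condDens, condDens, dependsOn_marginal μ _ f hxy,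
    dependsOn_marginal μ T2 f fun i hi => hxy i (Finset.mem_union_right T1 hi)]

lemma marginal_mul_of_dependsOn {S : Finset (Fin d)} (hg : DependsOn g S) (hf : Measurable f) :
    marginal μ S (g * f) = g * marginal μ S f :=
  lmarginal_mul_of_dependsOn μ (by simpa using hg) hf

variable [∀ i, SigmaFinite (μ i)]

lemma measurable_marginal (S : Finset (Fin d)) (hf : Measurable f) :
    Measurable (marginal μ S f) :=
  hf.lmarginal μ

lemma measurable_condDens (T1 T2 : Finset (Fin d)) (hf : Measurable f) :
    Measurable (condDens μ T1 T2 f) :=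
  measurable_safeDiv (measurable_marginal μ _ hf) (measurable_marginal μ _ hf)

lemma lmarginal_marginal_union {T1 T2 : Finset (Fin d)} (hT : Disjoint T1 T2)
    (hf : Measurable f) : lmarginal μ T1 (marginal μ (T1 ∪ T2) f) = marginal μ T2 f := by
  have hT_compl : T1 ∪ (T1 ∪ T2)ᶜ = T2ᶜ := by
    rw [Finset.compl_union, Finset.union_inter_distrib_left, Finset.union_compl, Finset.univ_inter,
      Finset.union_eq_right, Finset.subset_compl_iff_disjoint_right]
    exact hT
  have hT1_disj : Disjoint T1 (T1 ∪ T2)ᶜ :=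
    disjoint_compl_right.mono_left Finset.subset_union_left
  rw [marginal, ← lmarginal_union μ f hf hT1_disj, hT_compl, marginal]

lemma lmarginal_condDens_le_one {T1 T2 : Finset (Fin d)} (hT : Disjoint T1 T2)
    (hf : Measurable f) : lmarginal μ T1 (condDens μ T1 T2 f) ≤ 1 := by
  have condDens_eq : condDens μ T1 T2 f =
      (fun x => safeDiv 1 (marginal μ T2 f x)) * marginal μ (T1 ∪ T2) f :=
    funext fun x => safeDiv_eq_safeDiv_one_mul _ _
  have hdep : DependsOn (fun x => safeDiv 1 (marginal μ T2 f x)) (T1 : Set (Fin d))ᶜ :=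
    fun x y hxy => congrArg (safeDiv 1) <| dependsOn_marginal μ T2 f fun i hi =>
      hxy i (Finset.disjoint_right.1 hT hi)
  rw [condDens_eq, lmarginal_mul_of_dependsOn μ hdep (measurable_marginal μ _ hf),
    lmarginal_marginal_union μ hT hf]
  exact fun x => safeDiv_mul_le _ _

lemma lintegral_safeDiv_marginal_le (S : Finset (Fin d)) (hf : Measurable f) (hh : Measurable h) :
    ∫⁻ x, safeDiv (marginal μ S f x) (marginal μ S h x) ∂(Measure.pi μ).withDensity h ≤
      ∫⁻ x, f x ∂Measure.pi μ := by
  set r : (∀ i, π i) → ℝ≥0∞ := fun x => safeDiv (marginal μ S f x) (marginal μ S h x)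
  have hr : Measurable r :=
    measurable_safeDiv (measurable_marginal μ S hf) (measurable_marginal μ S hh)
  have hr_dep : DependsOn r S := fun x y hxy =>
    congrArg₂ safeDiv (dependsOn_marginal μ S f hxy) (dependsOn_marginal μ S h hxy)
  rw [lintegral_withDensity_eq_lintegral_mul _ hh hr, mul_comm h r]
  refine lintegral_le_of_lmarginal_le Sᶜ (hr.mul hh) hf ?_
  calc marginal μ S (r * h)
      = r * marginal μ S h := marginal_mul_of_dependsOn μ hr_dep hh
    _ ≤ marginal μ S f := fun x => safeDiv_mul_le _ _

lemma lintegral_safeDiv_condDens_le {T1 T2 : Finset (Fin d)} (hT : Disjoint T1 T2)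
    (hf : Measurable f) (hh : Measurable h) :
    ∫⁻ x, safeDiv (condDens μ T1 T2 f x) (condDens μ T1 T2 h x) ∂(Measure.pi μ).withDensity h ≤
      ∫⁻ x, h x ∂Measure.pi μ := by
  set r : (∀ i, π i) → ℝ≥0∞ := fun x => safeDiv (condDens μ T1 T2 f x) (condDens μ T1 T2 h x)
  have hr : Measurable r :=
    measurable_safeDiv (measurable_condDens μ T1 T2 hf) (measurable_condDens μ T1 T2 hh)
  have hr_dep : DependsOn r ((T1 ∪ T2 : Finset (Fin d)) : Set (Fin d)) := fun x y hxy =>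
    congrArg₂ safeDiv (dependsOn_condDens μ T1 T2 f hxy) (dependsOn_condDens μ T1 T2 h hxy)
  have hh_dep : DependsOn (marginal μ T2 h) (T1 : Set (Fin d))ᶜ :=
    (dependsOn_marginal μ T2 h).mono fun i hi => Finset.disjoint_right.1 hT hi
  rw [lintegral_withDensity_eq_lintegral_mul _ hh hr, mul_comm h r]
  refine lintegral_le_of_lmarginal_le T2ᶜ (hr.mul hh) hh ?_
  calc marginal μ T2 (r * h)
      = lmarginal μ T1 (marginal μ (T1 ∪ T2) (r * h)) :=
        (lmarginal_marginal_union μ hT (hr.mul hh)).symm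
    _ = lmarginal μ T1 (r * marginal μ (T1 ∪ T2) h) := by
        rw [marginal_mul_of_dependsOn μ hr_dep hh]
    _ ≤ lmarginal μ T1 (marginal μ T2 h * condDens μ T1 T2 f) :=
        lmarginal_mono fun x => safeDiv_safeDiv_mul_le _ _ _
    _ = marginal μ T2 h * lmarginal μ T1 (condDens μ T1 T2 f) :=
        lmarginal_mul_of_dependsOn μ hh_dep (measurable_condDens μ T1 T2 hf)
    _ ≤ marginal μ T2 h := mul_le_of_le_one_right' (lmarginal_condDens_le_one μ hT hf)

end Marginal

section CompLik

variable (μ : ∀ i, Measure (π i)) {α : Sd d → ℝ} {β : Td d → ℝ} {γ : ℝ}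

lemma safeDiv_compLik_compLik (hα : ∀ S, 0 ≤ α S) (hβ : ∀ T, 0 ≤ β T) (hγ : 0 ≤ γ)
    (f h : (∀ i, π i) → ℝ≥0∞) (x : ∀ i, π i) :
    safeDiv (compLik μ α β γ f x) (compLik μ α β γ h x) =
      (∏ S : Sd d, safeDiv (marginal μ S.1 f x) (marginal μ S.1 h x) ^ (α S / γ)) *
      ∏ T : Td d, safeDiv (condDens μ T.1.1 T.1.2 f x) (condDens μ T.1.1 T.1.2 h x) ^
        (β T / γ) := by
  simp only [compLik, safeDiv_mul_mul_comm, safeDiv_prod_prod,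
    fun a b S => safeDiv_rpow_rpow a b (div_nonneg (hα S) hγ),
    fun a b T => safeDiv_rpow_rpow a b (div_nonneg (hβ T) hγ)]

variable [∀ i, SigmaFinite (μ i)]

lemma lintegral_safeDiv_compLik_le_one (hα : ∀ S, 0 ≤ α S) (hβ : ∀ T, 0 ≤ β T)
    (hγ : γ = ∑ S, α S + ∑ T, β T) (hγ_pos : 0 < γ) {f h : (∀ i, π i) → ℝ≥0∞}
    (hf : Measurable f) (hh : Measurable h)
    (hf_le : ∫⁻ x, f x ∂Measure.pi μ ≤ 1) (hh_le : ∫⁻ x, h x ∂Measure.pi μ ≤ 1) :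
    ∫⁻ x, safeDiv (compLik μ α β γ f x) (compLik μ α β γ h x)
      ∂(Measure.pi μ).withDensity h ≤ 1 := by
  have weights_sum : ∑ S, α S / γ + ∑ T, β T / γ = 1 := by
    rw [← Finset.sum_div, ← Finset.sum_div, ← add_div, ← hγ, div_self hγ_pos.ne']
  simp only [safeDiv_compLik_compLik μ hα hβ hγ_pos.le]
  exact lintegral_prod_rpow_mul_prod_rpow_le_one
    (fun S => (measurable_safeDiv (measurable_marginal μ S.1 hf)
      (measurable_marginal μ S.1 hh)).aemeasurable)
    (fun T => (measurable_safeDiv (measurable_condDens μ T.1.1 T.1.2 hf)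
      (measurable_condDens μ T.1.1 T.1.2 hh)).aemeasurable)
    (fun S => div_nonneg (hα S) hγ_pos.le) (fun T => div_nonneg (hβ T) hγ_pos.le) weights_sum
    (fun S => (lintegral_safeDiv_marginal_le μ S.1 hf hh).trans hf_le)
    (fun T => (lintegral_safeDiv_condDens_le μ T.2.2.2 hf hh).trans hh_le)

variable {Θ : Type*} [MeasurableSpace Θ] {p : Θ → (∀ i, π i) → ℝ≥0∞}

lemma measurable_uncurry_marginal (hp : Measurable (Function.uncurry p)) (S : Finset (Fin d)) :
    Measurable (Function.uncurry fun θ => marginal μ S (p θ)) := by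
  refine Measurable.lintegral_prod_right (f := fun (z : Θ × ∀ i, π i) (y : ∀ i : ↥Sᶜ, π i) =>
    p z.1 (Function.updateFinset z.2 Sᶜ y)) ?_
  exact hp.comp <| (measurable_fst.comp measurable_fst).prodMk <|
    measurable_updateFinset'.comp <| (measurable_snd.comp measurable_fst).prodMk measurable_snd

variable (α β γ) in
lemma measurable_uncurry_compLik (hp : Measurable (Function.uncurry p)) :
    Measurable (Function.uncurry fun θ => compLik μ α β γ (p θ)) :=
  (Finset.measurable_prod _ fun S _ => (measurable_uncurry_marginal μ hp S.1).pow_const _).mul <|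
    Finset.measurable_prod _ fun T _ =>
      (measurable_safeDiv (measurable_uncurry_marginal μ hp (T.1.1 ∪ T.1.2))
        (measurable_uncurry_marginal μ hp T.1.2)).pow_const _

variable (α β γ) in
lemma measurable_uncurry_safeDiv_compLik (hp : Measurable (Function.uncurry p)) (θ₀ : Θ) :
    Measurable (Function.uncurry fun θ x =>
      safeDiv (compLik μ α β γ (p θ) x) (compLik μ α β γ (p θ₀) x)) :=
  have hL := measurable_uncurry_compLik μ α β γ hp
  measurable_safeDiv hL (hL.of_uncurry_left.comp measurable_snd)

end CompLik

theorem split_CLRS_expectation_le_one_general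
    (μ : ∀ i, Measure (π i)) [∀ i, SigmaFinite (μ i)]
    {Θ : Type*} [MeasurableSpace Θ] {p : Θ → (∀ i, π i) → ℝ≥0∞}
    (hp_meas : Measurable (Function.uncurry p))
    (hp_prob : ∀ θ : Θ, ∫⁻ x, p θ x ∂(Measure.pi μ) = 1)
    {α : Sd d → ℝ} {β : Td d → ℝ} (hα : ∀ S, 0 ≤ α S) (hβ : ∀ T, 0 ≤ β T)
    {γ : ℝ} (hγ : γ = ∑ S, α S + ∑ T, β T) (hγ_pos : 0 < γ)
    {Ω B ι : Type*} [MeasurableSpace Ω] [MeasurableSpace B] [Fintype ι]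
    {P : Measure Ω} {ρ : Measure B} [IsProbabilityMeasure ρ] {θstar : Θ}
    {X : ι → Ω → ∀ i, π i} {Y : Ω → B}
    (hXY : MeasurePreserving (fun ω => (fun j => X j ω, Y ω)) P
      ((Measure.pi fun _ : ι => (Measure.pi μ).withDensity (p θstar)).prod ρ))
    {t : B → Θ} (ht : Measurable t) :
    ∫⁻ ω, safeDiv (∏ j, compLik μ α β γ (p (t (Y ω))) (X j ω))
      (∏ j, compLik μ α β γ (p θstar) (X j ω)) ∂P ≤ 1 := by
  have : IsProbabilityMeasure ((Measure.pi μ).withDensity (p θstar)) :=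
    isProbabilityMeasure_withDensity_of_lintegral_eq_one (hp_prob θstar)
  have hp (θ : Θ) : Measurable (p θ) := hp_meas.of_uncurry_left
  have ratio_le_one (θ : Θ) := lintegral_safeDiv_compLik_le_one μ hα hβ hγ hγ_pos
    (hp θ) (hp θstar) (hp_prob θ).le (hp_prob θstar).le
  simp only [safeDiv_prod_prod]
  exact lintegral_prod_comp_le_one_of_measurePreserving_prod hXY ht
    (measurable_uncurry_safeDiv_compLik μ α β γ hp_meas θstar) ratio_le_one

/-- For each `k ∈ {0,1}` and every `n ∈ ℕ`, the split composite
likelihood ratio statistic evaluated at the true parameter has expectation at most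
one: `E_{θ*}[U_{α,β,n}^k(θ*)] ≤ 1`. -/
theorem split_CLRS_expectation_le_one
    {d : ℕ} (hd : 1 ≤ d)
    {π : Fin d → Type*} [∀ i, MeasurableSpace (π i)]
    (μ : ∀ i, Measure (π i)) [∀ i, SigmaFinite (μ i)]
    {Θ : Type*} [MeasurableSpace Θ]
    (p : Θ → (∀ i, π i) → ℝ≥0∞)
    (hp_meas : Measurable (Function.uncurry p))
    (hp_prob : ∀ θ : Θ, ∫⁻ x, p θ x ∂(Measure.pi μ) = 1)
    (α : Sd d → ℝ) (β : Td d → ℝ)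
    (hα : ∀ S, 0 ≤ α S) (hβ : ∀ T, 0 ≤ β T)
    (γ : ℝ) (hγ : γ = ∑ S, α S + ∑ T, β T) (hγpos : 0 < γ)
    {Ω : Type*} [MeasurableSpace Ω]
    (Pr : Measure Ω) [IsProbabilityMeasure Pr]
    (θstar : Θ) (n : ℕ)
    -- the two halves `X_n^0` and `X_n^1` of the i.i.d. sample of size `2n`
    (X0 X1 : Fin n → Ω → (∀ i, π i))
    (hX0 : ∀ j, Measurable (X0 j)) (hX1 : ∀ j, Measurable (X1 j))
    -- the `2n` observations are i.i.d. with density `p(·;θ*)` w.r.t. `μ`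
    (hlaw : Measure.map (fun ω => (fun j => X0 j ω, fun j => X1 j ω)) Pr
      = (Measure.pi fun _ : Fin n => (Measure.pi μ).withDensity (p θstar)).prod
          (Measure.pi fun _ : Fin n => (Measure.pi μ).withDensity (p θstar)))
    -- the estimators `θ̃_n^0`, `θ̃_n^1` are measurable functions of `X_n^0`, `X_n^1` alone
    (t0 t1 : (Fin n → ∀ i, π i) → Θ)
    (ht0 : Measurable t0) (ht1 : Measurable t1) :
    -- `E_{θ*}[U_{α,β,n}^0(θ*)] ≤ 1`
    (∫⁻ ω, safeDiv
        (∏ j : Fin n, compLik μ α β γ (p (t1 fun j' => X1 j' ω)) (X0 j ω))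
        (∏ j : Fin n, compLik μ α β γ (p θstar) (X0 j ω)) ∂Pr) ≤ 1 ∧
    -- `E_{θ*}[U_{α,β,n}^1(θ*)] ≤ 1`
    (∫⁻ ω, safeDiv
        (∏ j : Fin n, compLik μ α β γ (p (t0 fun j' => X0 j' ω)) (X1 j ω))
        (∏ j : Fin n, compLik μ α β γ (p θstar) (X1 j ω)) ∂Pr) ≤ 1 := by
  have : IsProbabilityMeasure ((Measure.pi μ).withDensity (p θstar)) :=
    isProbabilityMeasure_withDensity_of_lintegral_eq_one (hp_prob θstar)
  have hX : MeasurePreserving (fun ω => (fun j => X0 j ω, fun j => X1 j ω)) Pr _ :=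
    ⟨(measurable_pi_lambda _ hX0).prodMk (measurable_pi_lambda _ hX1), hlaw⟩
  exact ⟨split_CLRS_expectation_le_one_general μ hp_meas hp_prob hα hβ hγ hγpos hX ht1,
    split_CLRS_expectation_le_one_general μ hp_meas hp_prob hα hβ hγ hγpos
      (Measure.measurePreserving_swap.comp hX) ht0⟩
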